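/- Let D ≥ 2. For n ≥ 0 let W_n be the space of homogeneous degree-n polynomial vector fields P satisfying □P_μ − ∂_μ(Σ_ν ∂^ν P_ν) = 0 for all μ (i.e. δdP = 0), and let G_n = {(∂_μ R)_μ : R a homogeneous polynomial of degree n+1} be the gradients. Then G_n ⊆ W_n and the quotient W_n/G_n has dimension D·C(D−1+n, D−1) + C(D−4+n, D−1) − C(D+n, D−1) − D·C(D−3+n, D−1), where C(a,b) is the binomial coefficient (equal to 0 when a < b); in particular the dimension is 0 for n = 0, D(D−1)/2 for n = 1, and D(D−2)(D+2)/3 for n = 2. (These are the graded dimensions Gr_{−n}H¹ of the ghost-number-one cohomology of the zero-momentum chiral extended complex, via the identification E₃^{(1)} = ker(δd, Ω¹)/dΩ⁰.) -/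

import Mathlib

open MvPolynomial

/-- The partial derivative `∂_μ` on `ℂ[x^0, …, x^{D-1}]`, as a linear map. -/
noncomputable def pd (D : ℕ) (μ : Fin D) :
    MvPolynomial (Fin D) ℂ →ₗ[ℂ] MvPolynomial (Fin D) ℂ :=
  (pderiv μ).toLinearMap

/-- The raised-index derivative `∂^μ = η^{μμ} ∂_μ` for the Minkowski metric
`η = diag(-1, 1, …, 1)` (no sum over `μ`). -/
noncomputable def pdU (D : ℕ) (μ : Fin D) :
    MvPolynomial (Fin D) ℂ →ₗ[ℂ] MvPolynomial (Fin D) ℂ :=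
  (if (μ : ℕ) = 0 then (-1 : ℂ) else 1) • pd D μ

/-- The d'Alembertian `□ = Σ_μ ∂^μ ∂_μ`. -/
noncomputable def boxOp (D : ℕ) :
    MvPolynomial (Fin D) ℂ →ₗ[ℂ] MvPolynomial (Fin D) ℂ :=
  ∑ μ : Fin D, (pdU D μ) ∘ₗ (pd D μ)

/-- The divergence `δ : P ↦ Σ_ν ∂^ν P_ν` on polynomial vector fields. -/
noncomputable def divOp (D : ℕ) :
    (Fin D → MvPolynomial (Fin D) ℂ) →ₗ[ℂ] MvPolynomial (Fin D) ℂ :=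
  ∑ ν : Fin D, (pdU D ν) ∘ₗ LinearMap.proj ν

/-- The operator `δd : P ↦ (□P_μ − ∂_μ(Σ_ν ∂^ν P_ν))_μ` on polynomial vector fields. -/
noncomputable def deltaDOp (D : ℕ) :
    (Fin D → MvPolynomial (Fin D) ℂ) →ₗ[ℂ] (Fin D → MvPolynomial (Fin D) ℂ) :=
  LinearMap.pi fun μ => boxOp D ∘ₗ LinearMap.proj μ - pd D μ ∘ₗ divOp D

/-- `W_n`: homogeneous degree-`n` polynomial vector fields `P` with `δdP = 0`. -/
noncomputable def Wn (D n : ℕ) : Submodule ℂ (Fin D → MvPolynomial (Fin D) ℂ) :=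
  LinearMap.ker (deltaDOp D) ⊓
    Submodule.pi Set.univ fun _ : Fin D => homogeneousSubmodule (Fin D) ℂ n

/-- The gradient `R ↦ (∂_μ R)_μ` as a linear map. -/
noncomputable def grad (D : ℕ) :
    MvPolynomial (Fin D) ℂ →ₗ[ℂ] (Fin D → MvPolynomial (Fin D) ℂ) :=
  LinearMap.pi fun μ => pd D μ

/-- `G_n`: gradients of homogeneous polynomials of degree `n+1`. -/
noncomputable def Gn (D n : ℕ) : Submodule ℂ (Fin D → MvPolynomial (Fin D) ℂ) :=
  (homogeneousSubmodule (Fin D) ℂ (n + 1)).map (grad D)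

/-- The combinatorial binomial coefficient `C(a, b)` for an integer top argument, equal to `0`
whenever `a < b` (in particular for negative `a`). -/
def chooseZ (a : ℤ) (b : ℕ) : ℤ :=
  if 0 ≤ a then (a.toNat.choose b : ℤ) else 0


namespace ChiralAux

lemma rank_null {V V' : Type*} [AddCommGroup V] [Module ℂ V] [AddCommGroup V'] [Module ℂ V']
    (f : V →ₗ[ℂ] V') (K : Submodule ℂ V) [Module.Finite ℂ K] :
    Module.finrank ℂ (K.map f) + Module.finrank ℂ (LinearMap.ker f ⊓ K : Submodule ℂ V)
      = Module.finrank ℂ K := by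
  have h := LinearMap.finrank_range_add_finrank_ker (f.domRestrict K)
  rw [LinearMap.range_domRestrict, LinearMap.ker_domRestrict] at h
  rw [← h]
  congr 1
  have e : Submodule.comap K.subtype (LinearMap.ker f)
      = Submodule.comap K.subtype (LinearMap.ker f ⊓ K) := by
    ext x; simp
  rw [e]
  exact (Submodule.comapSubtypeEquivOfLe inf_le_right).finrank_eq.symm

instance finH (D n : ℕ) : Module.Finite ℂ (homogeneousSubmodule (Fin D) ℂ n) :=
  Module.Finite.iff_fg.mpr (homogeneousSubmodule_fg (σ := Fin D) (R := ℂ) n)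

lemma finrank_H (d n : ℕ) :
    Module.finrank ℂ (homogeneousSubmodule (Fin (d+2)) ℂ n) = (d + 1 + n).choose (d+1) := by
  rw [homogeneousSubmodule_eq_finsupp_supported]
  have e := AddMonoidAlgebra.supportedEquivFinsupp (R := ℂ) (S := ℂ) {m : Fin (d+2) →₀ ℕ | m.degree = n}
  rw [e.finrank_eq]
  have hs : {m : Fin (d+2) →₀ ℕ | m.degree = n} = ↑(Finset.finsuppAntidiag (Finset.univ : Finset (Fin (d+2))) n) := by
    ext m; simp [Finsupp.degree_eq_sum]
  rw [hs, Module.finrank_finsupp_self, ← Nat.card_eq_fintype_card, Nat.card_coe_set_eq, Set.ncard_coe_finset, Finset.card_finsuppAntidiag_nat_eq_choose]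
  simp only [Finset.card_univ, Fintype.card_fin]
  rw [show d + 2 + n - 1 = d + 1 + n by omega, Nat.choose_symm_add]

/-- homogeneous vector fields -/
noncomputable abbrev V (D n : ℕ) : Submodule ℂ (Fin D → MvPolynomial (Fin D) ℂ) :=
  Submodule.pi Set.univ fun _ : Fin D => homogeneousSubmodule (Fin D) ℂ n

noncomputable def VEquiv (D n : ℕ) : V D n ≃ₗ[ℂ] (Fin D → homogeneousSubmodule (Fin D) ℂ n) where
  toFun p := fun i => ⟨p.1 i, p.2 i trivial⟩
  invFun q := ⟨fun i => (q i).1, fun i _ => (q i).2⟩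
  map_add' _ _ := rfl
  map_smul' _ _ := rfl
  left_inv _ := rfl
  right_inv _ := rfl

instance finV (D n : ℕ) : Module.Finite ℂ (V D n) := Module.Finite.equiv (VEquiv D n).symm

lemma finrank_V (d n : ℕ) :
    Module.finrank ℂ (V (d+2) n) = (d+2) * (d + 1 + n).choose (d+1) := by
  rw [(VEquiv _ _).finrank_eq, Module.finrank_pi_fintype]
  simp [finrank_H]

/-- integration in the variable `i` -/
noncomputable def integ {D : ℕ} (i : Fin D) :
    MvPolynomial (Fin D) ℂ →ₗ[ℂ] MvPolynomial (Fin D) ℂ :=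
  (basisMonomials (Fin D) ℂ).constr ℂ
    (fun m => monomial (m + Finsupp.single i 1) (((m i : ℂ) + 1)⁻¹))

lemma integ_monomial {D : ℕ} (i : Fin D) (m : Fin D →₀ ℕ) :
    integ i (monomial m 1) = monomial (m + Finsupp.single i 1) (((m i : ℂ) + 1)⁻¹) := by
  have := (basisMonomials (Fin D) ℂ).constr_basis ℂ
    (fun m => monomial (m + Finsupp.single i 1) (((m i : ℂ) + 1)⁻¹)) m
  simpa [integ] using this

lemma pd_monomial {D : ℕ} (i : Fin D) (m : Fin D →₀ ℕ) (a : ℂ) :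
    pd D i (monomial m a) = monomial (m - Finsupp.single i 1) (a * m i) := by
  simp [pd, pderiv_monomial]

lemma integ_monomial' {D : ℕ} (i : Fin D) (m : Fin D →₀ ℕ) (a : ℂ) :
    integ i (monomial m a) = monomial (m + Finsupp.single i 1) (a * ((m i : ℂ) + 1)⁻¹) := by
  have : (monomial m a : MvPolynomial (Fin D) ℂ) = a • monomial m 1 := by simp [smul_monomial]
  rw [this, map_smul, integ_monomial, smul_monomial, smul_eq_mul]

lemma lin_ext {D : ℕ} {f g : MvPolynomial (Fin D) ℂ →ₗ[ℂ] MvPolynomial (Fin D) ℂ}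
    (h : ∀ m : Fin D →₀ ℕ, f (monomial m 1) = g (monomial m 1)) (p) : f p = g p := by
  have : f = g := (basisMonomials (Fin D) ℂ).ext (by simpa using h)
  rw [this]

lemma pd_integ_self {D : ℕ} (i : Fin D) (p) : pd D i (integ i p) = p := by
  refine lin_ext (f := pd D i ∘ₗ integ i) (g := LinearMap.id) (fun m => ?_) p
  have : (m i : ℂ) + 1 ≠ 0 := by exact_mod_cast Nat.succ_ne_zero (m i)
  simp [integ_monomial, pd_monomial, this]

lemma pd_integ_ne {D : ℕ} {i j : Fin D} (h : i ≠ j) (p) :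
    pd D i (integ j p) = integ j (pd D i p) := by
  refine lin_ext (f := pd D i ∘ₗ integ j) (g := integ j ∘ₗ pd D i) (fun m => ?_) p
  simp only [LinearMap.comp_apply, integ_monomial', pd_monomial]
  by_cases hm : m i = 0
  · simp [hm, h]
  · have e : m + Finsupp.single j 1 - Finsupp.single i 1 = m - Finsupp.single i 1 + Finsupp.single j 1 := by
      ext k
      simp only [Finsupp.coe_add, Finsupp.coe_tsub, Pi.add_apply, Pi.sub_apply, Finsupp.single_apply]
      by_cases h1 : i = k
      · subst h1; simp [h.symm]
      · simp [h1]
    rw [e]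
    simp [h, h.symm, mul_comm]

lemma pd_comm {D : ℕ} (i j : Fin D) (p) : pd D i (pd D j p) = pd D j (pd D i p) := by
  refine lin_ext (f := pd D i ∘ₗ pd D j) (g := pd D j ∘ₗ pd D i) (fun m => ?_) p
  simp only [LinearMap.comp_apply, pd_monomial]
  by_cases h : i = j
  · subst h; rfl
  · rw [tsub_right_comm]
    simp [h, Ne.symm h, mul_comm]

lemma hom_pd {D n : ℕ} (i : Fin D) {p : MvPolynomial (Fin D) ℂ} (h : p.IsHomogeneous n) :
    (pd D i p).IsHomogeneous (n-1) := h.pderiv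

lemma hom_integ {D n : ℕ} (i : Fin D) {p : MvPolynomial (Fin D) ℂ} (h : p.IsHomogeneous n) :
    (integ i p).IsHomogeneous (n+1) := by
  rw [p.as_sum, map_sum]
  refine IsHomogeneous.sum _ _ _ (fun m hm => ?_)
  rw [integ_monomial']
  apply isHomogeneous_monomial
  have := h.degree_eq_sum_deg_support hm
  rw [map_add, Finsupp.degree_single, this, Finsupp.degree_apply]

lemma pdU_zero (d : ℕ) (p) : pdU (d+2) 0 p = - pd (d+2) 0 p := by simp [pdU]
lemma pdU_succ (d : ℕ) (i : Fin (d+1)) (p) : pdU (d+2) i.succ p = pd (d+2) i.succ p := by simp [pdU]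

lemma hom_pdU {D n : ℕ} (i : Fin D) {p : MvPolynomial (Fin D) ℂ} (h : p.IsHomogeneous n) :
    (pdU D i p).IsHomogeneous (n-1) :=
  (homogeneousSubmodule (Fin D) ℂ (n-1)).smul_mem _ (hom_pd i h)

lemma pdU_apply {D : ℕ} (i : Fin D) (p) :
    pdU D i p = (if (i : ℕ) = 0 then (-1 : ℂ) else 1) • pd D i p := rfl

lemma pd_pdU_comm {D : ℕ} (i j : Fin D) (p) : pd D i (pdU D j p) = pdU D j (pd D i p) := by
  rw [pdU_apply, pdU_apply, map_smul, pd_comm i j]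

lemma pdU_pdU_comm {D : ℕ} (i j : Fin D) (p) : pdU D i (pdU D j p) = pdU D j (pdU D i p) := by
  conv_lhs => rw [pdU, LinearMap.smul_apply, pd_pdU_comm, ← map_smul]
  rfl

lemma box_apply {D : ℕ} (p) : boxOp D p = ∑ i, pdU D i (pd D i p) := by simp [boxOp]

lemma div_apply {D : ℕ} (P) : divOp D P = ∑ i, pdU D i (P i) := by simp [divOp]

lemma dd_apply {D : ℕ} (P) (i) : deltaDOp D P i = boxOp D (P i) - pd D i (divOp D P) := by
  simp [deltaDOp]

lemma box_pd {D : ℕ} (i : Fin D) (p) : boxOp D (pd D i p) = pd D i (boxOp D p) := by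
  simp only [box_apply, map_sum, pd_pdU_comm, pd_comm i]

lemma box_pdU {D : ℕ} (i : Fin D) (p) : boxOp D (pdU D i p) = pdU D i (boxOp D p) := by
  simp only [box_apply, map_sum, pd_pdU_comm, pdU_pdU_comm i]

lemma hom_box {D n : ℕ} {p : MvPolynomial (Fin D) ℂ} (h : p.IsHomogeneous n) :
    (boxOp D p).IsHomogeneous (n-1-1) := by
  rw [box_apply]
  exact IsHomogeneous.sum _ _ _ (fun i _ => hom_pdU i (hom_pd i h))

lemma hom_div {D n : ℕ} {P : Fin D → MvPolynomial (Fin D) ℂ} (h : ∀ i, (P i).IsHomogeneous n) :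
    (divOp D P).IsHomogeneous (n-1) := by
  rw [div_apply]
  exact IsHomogeneous.sum _ _ _ (fun i _ => hom_pdU i (h i))

lemma pd_hom_zero {D : ℕ} (i : Fin D) {p : MvPolynomial (Fin D) ℂ} (h : p.IsHomogeneous 0) :
    pd D i p = 0 := by
  rw [← mem_homogeneousSubmodule, homogeneousSubmodule_zero] at h
  obtain ⟨c, rfl⟩ := Submodule.mem_one.mp h
  simp [pd]

lemma div_hom_zero {D : ℕ} {P : Fin D → MvPolynomial (Fin D) ℂ} (h : ∀ i, (P i).IsHomogeneous 0) :
    divOp D P = 0 := by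
  simp [div_apply, pdU_apply, pd_hom_zero _ (h _)]

/-- the spatial Laplacian -/
noncomputable def lap (d : ℕ) : MvPolynomial (Fin (d+2)) ℂ →ₗ[ℂ] MvPolynomial (Fin (d+2)) ℂ :=
  ∑ i : Fin (d+1), pd (d+2) i.succ ∘ₗ pd (d+2) i.succ

lemma lap_apply {d : ℕ} (p) : lap d p = ∑ i : Fin (d+1), pd (d+2) i.succ (pd (d+2) i.succ p) := by
  simp [lap]

lemma box_lap {d : ℕ} (p) : boxOp (d+2) p = - pd (d+2) 0 (pd (d+2) 0 p) + lap d p := by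
  rw [box_apply, Fin.sum_univ_succ, pdU_zero, lap_apply]
  simp [pdU_succ]

lemma lap_integ {d : ℕ} (p) : lap d (integ 0 p) = integ 0 (lap d p) := by
  simp [lap_apply, pd_integ_ne]

lemma lap_pd {d : ℕ} (i) (p) : lap d (pd (d+2) i p) = pd (d+2) i (lap d p) := by
  simp only [lap_apply, map_sum, pd_comm i]

lemma hom_lap {d n : ℕ} {p : MvPolynomial (Fin (d+2)) ℂ} (h : p.IsHomogeneous n) :
    (lap d p).IsHomogeneous (n-1-1) := by
  rw [lap_apply]
  exact IsHomogeneous.sum _ _ _ (fun i _ => hom_pd _ (hom_pd _ h))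

lemma lap_nil {d : ℕ} (N : ℕ) : ∀ n < N, ∀ p : MvPolynomial (Fin (d+2)) ℂ, p.IsHomogeneous n →
    (lap d ^ N) p = 0 := by
  induction N with
  | zero => intro n hn; omega
  | succ N ih =>
    intro n hn p hp
    rw [pow_succ, Module.End.mul_apply]
    rcases Nat.eq_zero_or_pos n with h0 | h0
    · subst h0
      have : lap d p = 0 := by simp [lap_apply, pd_hom_zero _ hp]
      simp [this]
    · exact ih _ (by omega) _ (hom_lap hp)

lemma lap_pow_integ {d : ℕ} (N : ℕ) (p) : (lap d ^ N) (integ 0 p) = integ 0 ((lap d ^ N) p) := by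
  induction N generalizing p with
  | zero => simp
  | succ N ih => simp only [pow_succ, Module.End.mul_apply, lap_integ, ih]

lemma box_surj_aux {d n : ℕ} (N : ℕ) : ∀ r : MvPolynomial (Fin (d+2)) ℂ, r.IsHomogeneous n →
    (lap d ^ N) r = 0 → ∃ s : MvPolynomial (Fin (d+2)) ℂ, s.IsHomogeneous (n+2) ∧
      boxOp (d+2) s = r ∧ (pd (d+2) 1 r = 0 → pd (d+2) 1 s = 0) := by
  induction N with
  | zero =>
    intro r _ h
    have hr : r = 0 := by simpa using h
    exact ⟨0, isHomogeneous_zero _ _ _, by simp [hr], by simp⟩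
  | succ N ih =>
    intro r hr h
    have h1 : (integ 0 (integ 0 r)).IsHomogeneous (n+2) := hom_integ _ (hom_integ _ hr)
    have h10 : (1 : Fin (d+2)) ≠ 0 := by simp
    obtain ⟨s, hs, hb, hp⟩ := ih (lap d (integ 0 (integ 0 r))) (hom_lap h1) (by
      rw [lap_integ, lap_integ, lap_pow_integ, lap_pow_integ,
        show (lap d ^ N) (lap d r) = 0 by rw [← Module.End.mul_apply, ← pow_succ, h]]
      simp)
    refine ⟨s - integ 0 (integ 0 r), hs.sub h1, ?_, ?_⟩
    · rw [map_sub, hb, box_lap, pd_integ_self, pd_integ_self]; ring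
    · intro h0
      have e : pd (d+2) 1 (integ 0 (integ 0 r)) = 0 := by
        rw [pd_integ_ne h10, pd_integ_ne h10, h0]; simp
      rw [map_sub, hp (by rw [← lap_pd, e, map_zero]), e, sub_zero]

lemma box_surj {d n : ℕ} (r : MvPolynomial (Fin (d+2)) ℂ) (hr : r.IsHomogeneous n) :
    ∃ s : MvPolynomial (Fin (d+2)) ℂ, s.IsHomogeneous (n+2) ∧
      boxOp (d+2) s = r ∧ (pd (d+2) 1 r = 0 → pd (d+2) 1 s = 0) :=
  box_surj_aux (n+1) r hr (lap_nil _ n (by omega) r hr)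

lemma pd_one_surj {d m : ℕ} (f : MvPolynomial (Fin (d+2)) ℂ) (hf : f.IsHomogeneous (m+1))
    (hb : boxOp (d+2) f = 0) : ∃ g : MvPolynomial (Fin (d+2)) ℂ, g.IsHomogeneous (m+2) ∧
      boxOp (d+2) g = 0 ∧ pd (d+2) 1 g = f := by
  have h0 : (integ 1 f).IsHomogeneous (m+2) := hom_integ _ hf
  obtain ⟨s, hs, hbs, hps⟩ := box_surj (boxOp (d+2) (integ 1 f)) (hom_box h0)
  have := hps (by rw [← box_pd, pd_integ_self, hb])
  exact ⟨integ 1 f - s, h0.sub hs, by rw [map_sub, hbs, sub_self],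
    by rw [map_sub, pd_integ_self, this, sub_zero]⟩

lemma mem_V {D n : ℕ} {P : Fin D → MvPolynomial (Fin D) ℂ} :
    P ∈ V D n ↔ ∀ i, (P i).IsHomogeneous n := by
  simp [V, Submodule.mem_pi]

lemma pdU_one (d : ℕ) (p) : pdU (d+2) 1 p = pd (d+2) 1 p := pdU_succ d 0 p

lemma div_single {d : ℕ} (g) : divOp (d+2) (Pi.single 1 g) = pd (d+2) 1 g := by
  rw [div_apply, Finset.sum_eq_single 1]
  · simp [pdU_one]
  · intro i _ hi; simp [hi]
  · simp

lemma hom_single {D n : ℕ} {j : Fin D} {g : MvPolynomial (Fin D) ℂ} (h : g.IsHomogeneous n) (i) :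
    ((Pi.single j g : Fin D → MvPolynomial (Fin D) ℂ) i).IsHomogeneous n := by
  by_cases hi : i = j
  · subst hi; simpa using h
  · simpa [hi] using isHomogeneous_zero _ _ _

lemma map_dd (d m : ℕ) : (V (d+2) (m+2)).map (deltaDOp (d+2))
    = LinearMap.ker (divOp (d+2)) ⊓ V (d+2) m := by
  apply le_antisymm
  · rintro _ ⟨P, hP, rfl⟩
    rw [SetLike.mem_coe, mem_V] at hP
    refine ⟨?_, mem_V.mpr fun i => ?_⟩
    · rw [SetLike.mem_coe, LinearMap.mem_ker, div_apply]
      simp only [dd_apply, map_sub, Finset.sum_sub_distrib, ← box_pdU]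
      rw [← map_sum, ← div_apply, ← box_apply, sub_self]
    · rw [dd_apply]
      exact (hom_box (hP i)).sub (hom_pd i (hom_div hP))
  · rintro j ⟨hj, hjV⟩
    rw [SetLike.mem_coe, mem_V] at hjV
    choose P hP hb _ using fun i => box_surj (j i) (hjV i)
    obtain ⟨g, hg, hgb, hgp⟩ := pd_one_surj (m := m) (divOp (d+2) P) (hom_div hP) (by
      rw [div_apply, map_sum]
      simp only [box_pdU, hb]
      rw [← div_apply]; exact hj)
    refine ⟨P - Pi.single 1 g, ?_, ?_⟩
    · rw [SetLike.mem_coe, mem_V]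
      exact fun i => (hP i).sub (hom_single hg i)
    · funext i
      rw [dd_apply, map_sub, div_single, hgp, sub_self, map_zero, sub_zero, Pi.sub_apply, map_sub, hb]
      by_cases hi : i = 1
      · subst hi; simp [hgb]
      · simp [hi]

lemma map_dd_low (d n : ℕ) (hn : n < 2) : (V (d+2) n).map (deltaDOp (d+2)) = ⊥ := by
  rw [eq_bot_iff]
  rintro _ ⟨P, hP, rfl⟩
  rw [SetLike.mem_coe, mem_V] at hP
  rw [Submodule.mem_bot]
  funext i
  have h0 : ∀ i k, (pd (d+2) i (P k)).IsHomogeneous 0 := fun i k => by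
    have := hom_pd i (hP k)
    rwa [show n - 1 = 0 by omega] at this
  have h1 : (divOp (d+2) P).IsHomogeneous 0 := by
    have := hom_div hP
    rwa [show n - 1 = 0 by omega] at this
  rw [dd_apply, pd_hom_zero _ h1, box_apply]
  simp [pdU_apply, pd_hom_zero _ (h0 _ _)]

lemma map_div (d m : ℕ) : (V (d+2) (m+1)).map (divOp (d+2)) = homogeneousSubmodule _ ℂ m := by
  apply le_antisymm
  · rintro _ ⟨P, hP, rfl⟩
    exact hom_div (mem_V.mp hP)
  · intro f hf
    refine ⟨Pi.single 1 (integ 1 f), mem_V.mpr (hom_single (hom_integ _ hf)), ?_⟩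
    rw [div_single, pd_integ_self]

lemma map_div_zero (d : ℕ) : (V (d+2) 0).map (divOp (d+2)) = ⊥ := by
  rw [eq_bot_iff]
  rintro _ ⟨P, hP, rfl⟩
  exact div_hom_zero (mem_V.mp hP)

lemma Gn_le (D n : ℕ) : Gn D n ≤ Wn D n := by
  rintro _ ⟨R, hR, rfl⟩
  refine ⟨?_, mem_V.mpr fun i => hom_pd i hR⟩
  rw [SetLike.mem_coe, LinearMap.mem_ker]
  funext i
  rw [dd_apply, div_apply]
  simp only [grad, LinearMap.pi_apply]
  rw [← box_apply, box_pd, sub_self]; rfl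

lemma finrank_G (d n : ℕ) : Module.finrank ℂ (Gn (d+2) n) = (d + 2 + n).choose (d+1) := by
  have h := rank_null (grad (d+2)) (homogeneousSubmodule (Fin (d+2)) ℂ (n+1))
  have hk : LinearMap.ker (grad (d+2)) ⊓ homogeneousSubmodule (Fin (d+2)) ℂ (n+1) = ⊥ := by
    rw [eq_bot_iff]
    rintro p ⟨hp, hh⟩
    have hz : ∀ i, pderiv i p = 0 := fun i => congrFun (LinearMap.mem_ker.mp hp) i
    have := IsHomogeneous.sum_X_mul_pderiv (φ := p) (n := n+1) hh
    simp only [hz, mul_zero, Finset.sum_const_zero] at this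
    have := this.symm
    rw [nsmul_eq_mul, mul_eq_zero] at this
    rcases this with h | h
    · exact absurd h (by exact_mod_cast Nat.succ_ne_zero n)
    · exact h
  rw [hk, finrank_bot, add_zero, finrank_H] at h
  rw [Gn, h]; congr 1; omega

lemma finrank_W (d n : ℕ) :
    Module.finrank ℂ ((V (d+2) n).map (deltaDOp (d+2))) + Module.finrank ℂ (Wn (d+2) n)
      = (d+2) * (d+1+n).choose (d+1) := by
  rw [← finrank_V]; exact rank_null _ _

instance finW (D n : ℕ) : Module.Finite ℂ (Wn D n) := by
  have : Wn D n ≤ V D n := inf_le_right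
  exact Submodule.finiteDimensional_of_le this

lemma finrank_Q (d n : ℕ) :
    Module.finrank ℂ (Wn (d+2) n ⧸ (Gn (d+2) n).comap (Wn (d+2) n).subtype)
      + (d+2+n).choose (d+1) = Module.finrank ℂ (Wn (d+2) n) := by
  rw [← finrank_G, ← Submodule.finrank_quotient_add_finrank ((Gn (d+2) n).comap (Wn (d+2) n).subtype),
    (Submodule.comapSubtypeEquivOfLe (Gn_le (d+2) n)).finrank_eq]

lemma chooseZ_nat (a b : ℕ) : chooseZ (a : ℤ) b = a.choose b := by simp [chooseZ]

lemma chooseZ_lt (a : ℤ) (b : ℕ) (h : a < b) : chooseZ a b = 0 := by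
  unfold chooseZ
  split_ifs with h0
  · rw [Nat.choose_eq_zero_of_lt (by omega)]; rfl
  · rfl

lemma main_formula (d n : ℕ) :
    (Module.finrank ℂ (Wn (d+2) n ⧸ (Gn (d+2) n).comap (Wn (d+2) n).subtype) : ℤ)
        = ((d + 2 : ℕ) : ℤ) * chooseZ (((d + 2 : ℕ) : ℤ) - 1 + n) (d + 1)
          + chooseZ (((d + 2 : ℕ) : ℤ) - 4 + n) (d + 1)
          - chooseZ (((d + 2 : ℕ) : ℤ) + n) (d + 1)
          - ((d + 2 : ℕ) : ℤ) * chooseZ (((d + 2 : ℕ) : ℤ) - 3 + n) (d + 1) := by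
  have hQ := finrank_Q d n
  have hW := finrank_W d n
  rw [show ((d + 2 : ℕ) : ℤ) - 1 + n = ((d + 1 + n : ℕ) : ℤ) by push_cast; ring,
    show ((d + 2 : ℕ) : ℤ) + n = ((d + 2 + n : ℕ) : ℤ) by push_cast; ring,
    chooseZ_nat, chooseZ_nat]
  rcases Nat.lt_or_ge n 2 with h | h
  · rw [map_dd_low d n h, finrank_bot] at hW
    rw [chooseZ_lt _ _ (by push_cast; omega), chooseZ_lt _ _ (by push_cast; omega)]
    zify at hQ hW
    push_cast
    linarith
  · obtain ⟨m, rfl⟩ := Nat.exists_eq_add_of_le' h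
    rw [map_dd] at hW
    have hD := rank_null (divOp (d+2)) (V (d+2) m)
    rw [finrank_V] at hD
    rw [show ((d + 2 : ℕ) : ℤ) - 3 + ((m + 2 : ℕ) : ℤ) = ((d + 1 + m : ℕ) : ℤ) by push_cast; ring,
      chooseZ_nat]
    rcases m with _ | k
    · rw [map_div_zero, finrank_bot] at hD
      rw [chooseZ_lt (((d + 2 : ℕ) : ℤ) - 4 + _) _ (by push_cast; omega)]
      zify at hQ hW hD
      push_cast at *
      linarith
    · rw [map_div, finrank_H] at hD
      rw [show ((d + 2 : ℕ) : ℤ) - 4 + ((k + 1 + 2 : ℕ) : ℤ) = ((d + 1 + k : ℕ) : ℤ) by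
        push_cast; ring, chooseZ_nat]
      zify at hQ hW hD
      push_cast at *
      linarith

lemma dim_zero (d : ℕ) :
    Module.finrank ℂ (Wn (d+2) 0 ⧸ (Gn (d+2) 0).comap (Wn (d+2) 0).subtype) = 0 := by
  have hQ := finrank_Q d 0
  have hW := finrank_W d 0
  rw [map_dd_low d 0 (by omega), finrank_bot] at hW
  have : (d+2).choose (d+1) = d + 2 := Nat.choose_succ_self_right (d+1)
  simp at hW hQ
  omega

lemma ch2 (k : ℕ) : 2 * (k+2).choose k = (k+2) * (k+1) := by
  have h := Nat.triangle_succ (k+1)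
  have h2 : (k+2).choose k = (k+2).choose 2 := by rw [← Nat.choose_symm_add]
  rw [h2, Nat.choose_two_right, Nat.mul_div_cancel' (Nat.even_mul_pred_self (k+2)).two_dvd]
  rfl

lemma ch3 (k : ℕ) : 6 * (k+3).choose k = (k+3) * (k+2) * (k+1) := by
  have h2 : (k+3).choose k = (k+3).choose 3 := by rw [← Nat.choose_symm_add]
  have h := Nat.descFactorial_eq_factorial_mul_choose (k+3) 3
  rw [h2, show 6 = Nat.factorial 3 from rfl, ← h]
  simp [Nat.descFactorial_succ]; ring

lemma dim_one (d : ℕ) :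
    Module.finrank ℂ (Wn (d+2) 1 ⧸ (Gn (d+2) 1).comap (Wn (d+2) 1).subtype)
      = (d+2) * (d+2-1) / 2 := by
  have hQ := finrank_Q d 1
  have hW := finrank_W d 1
  rw [map_dd_low d 1 (by omega), finrank_bot] at hW
  have h1 : (d+1+1).choose (d+1) = d + 2 := Nat.choose_succ_self_right (d+1)
  have h2 := ch2 (d+1)
  rw [h1] at hW
  symm
  apply Nat.div_eq_of_eq_mul_right (by norm_num)
  rw [show d + 2 - 1 = d + 1 by omega]
  rw [show d + 2 + 1 = d + 1 + 2 by ring] at hQ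
  nlinarith

lemma dim_two (d : ℕ) :
    Module.finrank ℂ (Wn (d+2) 2 ⧸ (Gn (d+2) 2).comap (Wn (d+2) 2).subtype)
      = (d+2) * (d+2-2) * (d+2+2) / 3 := by
  have hQ := finrank_Q d 2
  have hW := finrank_W d 2
  have hD := rank_null (divOp (d+2)) (V (d+2) 0)
  rw [map_div_zero, finrank_bot, finrank_V, ← map_dd d 0] at hD
  simp only [add_zero, zero_add, Nat.choose_self, mul_one] at hD
  rw [hD] at hW
  have h2 := ch2 (d+1)
  have h3 := ch3 (d+1)
  symm
  apply Nat.div_eq_of_eq_mul_right (by norm_num)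
  rw [show d + 2 - 2 = d by omega]
  rw [show d + 2 + 2 = d + 1 + 3 by ring] at hQ
  nlinarith

end ChiralAux

/-- Graded dimensions `Gr_{-n} H¹` of the ghost number one cohomology of the zero-momentum
chiral extended complex, via `E₃⁽¹⁾ = ker(δd, Ω¹)/dΩ⁰`:
`dim W_n/G_n = D·C(D−1+n, D−1) + C(D−4+n, D−1) − C(D+n, D−1) − D·C(D−3+n, D−1)`,
which equals `0` for `n = 0`, `D(D−1)/2` for `n = 1` and `D(D−2)(D+2)/3` for `n = 2`. -/
theorem chiral_ghost_one_graded_dimensions (D : ℕ) (hD : 2 ≤ D) :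
    (∀ n : ℕ, Gn D n ≤ Wn D n) ∧
    (∀ n : ℕ, Module.Finite ℂ (Wn D n ⧸ (Gn D n).comap (Wn D n).subtype)) ∧
    (∀ n : ℕ,
      (Module.finrank ℂ (Wn D n ⧸ (Gn D n).comap (Wn D n).subtype) : ℤ)
        = (D : ℤ) * chooseZ ((D : ℤ) - 1 + n) (D - 1)
          + chooseZ ((D : ℤ) - 4 + n) (D - 1)
          - chooseZ ((D : ℤ) + n) (D - 1)
          - (D : ℤ) * chooseZ ((D : ℤ) - 3 + n) (D - 1)) ∧
    Module.finrank ℂ (Wn D 0 ⧸ (Gn D 0).comap (Wn D 0).subtype) = 0 ∧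
    Module.finrank ℂ (Wn D 1 ⧸ (Gn D 1).comap (Wn D 1).subtype) = D * (D - 1) / 2 ∧
    Module.finrank ℂ (Wn D 2 ⧸ (Gn D 2).comap (Wn D 2).subtype)
      = D * (D - 2) * (D + 2) / 3 := by
  obtain ⟨d, rfl⟩ := Nat.exists_eq_add_of_le' hD
  exact ⟨ChiralAux.Gn_le _, fun n => inferInstance, ChiralAux.main_formula d,
    ChiralAux.dim_zero d, ChiralAux.dim_one d, ChiralAux.dim_two d⟩
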